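/- Let f be a continuous real-valued function on (0, ∞). Then the following are equivalent: (i) f is non-negative on (0, ∞) and operator monotone on (0, ∞), i.e. for all bounded self-adjoint operators A, B on H with spectra contained in (0, ∞), A ≤ B implies f(A) ≤ f(B); (ii) there exist α, β ≥ 0 and a positive Borel measure μ on (0, ∞) with ∫_{(0,∞)} (1 + λ)^{-1} dμ(λ) < ∞ such that f(x) = α + βx + ∫_{(0,∞)} x/(x + λ) dμ(λ) for all x ∈ (0, ∞). -/

import Mathlib

/-!
For the integral formula to give an operator monotone function it is enough that each
`x / (x + l) = 1 - l / (x + l)` is operator monotone, which follows from the antitonicity of the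
inverse.

Conversely, it suffices to show that every finite combination `∑ c x * x / (x + l)` that is
nonnegative for all `l > 0` satisfies `0 ≤ ∑ c x * f x`: the functional sending each kernel
`x ↦ (1 + l) * x / (x + l)`, a continuous function of `l ∈ [0, ∞]`, to `f x` then extends to a
positive functional by M. Riesz's theorem, and is integration against a measure, whose atoms at
`l = 0` and `l = ∞` are `α` and `β`.

Nodes at which a divided difference has negative weight are taken as the eigenvalues of a diagonal
matrix, and the remaining ones arise as the eigenvalues of a rank one perturbation of it. Comparing
quadratic forms gives `0 ≤ [S; f * b ^ 2]` for `2 * m` nodes `S` and `deg b < m` (Löwner). Adjoining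
two nodes that tend to `0` and `∞` gives `[S; f * a ^ 2 / x] ≤ 0` for nonnegative `f`. A combination
`∑ c x * x / (x + l)` with nodes in `S` is `p (-l) / ∏ (x + l)` for a polynomial `p ≥ 0` on
`(-∞, 0)` of degree below `2 * m`; such a `p` is a sum of terms `a ^ 2` and `-x * b ^ 2`, and
`∑ c x * f x = -[S; f * p / x]`.
-/

open ContinuousLinearMap MeasureTheory

variable {H : Type*} [NormedAddCommGroup H] [InnerProductSpace ℂ H] [CompleteSpace H]

section HalfLinePolynomials

open Polynomial

/-- `NegHalfLineSOS n p` says that `p` is a sum of terms `a ^ 2` and `-X * b ^ 2`, each of degree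
at most `n`: a certificate for `0 ≤ p` on `(-∞, 0)`. -/
inductive NegHalfLineSOS (n : ℕ) : ℝ[X] → Prop
  | sq (a : ℝ[X]) (ha : 2 * a.natDegree ≤ n) : NegHalfLineSOS n (a ^ 2)
  | neg_X_mul_sq (b : ℝ[X]) (hb : 2 * b.natDegree + 1 ≤ n) : NegHalfLineSOS n (-(X * b ^ 2))
  | add (p q : ℝ[X]) (hp : NegHalfLineSOS n p) (hq : NegHalfLineSOS n q) : NegHalfLineSOS n (p + q)

namespace NegHalfLineSOS

theorem eval_nonneg {n : ℕ} {p : ℝ[X]} (hp : NegHalfLineSOS n p) {t : ℝ} (ht : t < 0) :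
    0 ≤ p.eval t := by
  induction hp with
  | sq a _ => simpa only [eval_pow] using sq_nonneg (a.eval t)
  | neg_X_mul_sq b _ =>
    simpa only [eval_neg, eval_mul, eval_X, eval_pow, neg_mul] using
      mul_nonneg (neg_nonneg.mpr ht.le) (sq_nonneg (b.eval t))
  | add p q _ _ ihp ihq => simpa only [eval_add] using add_nonneg ihp ihq

theorem mul {n m : ℕ} {p q : ℝ[X]} (hp : NegHalfLineSOS n p) (hq : NegHalfLineSOS m q) :
    NegHalfLineSOS (n + m) (p * q) := by
  induction hp with
  | add p p' _ _ ihp ihp' => rw [add_mul]; exact .add _ _ ihp ihp'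
  | sq a ha =>
    induction hq with
    | add q q' _ _ ihq ihq' => rw [mul_add]; exact .add _ _ ihq ihq'
    | sq b hb =>
      rw [← mul_pow]
      exact .sq _ (by grind [natDegree_mul_le (p := a) (q := b)])
    | neg_X_mul_sq b hb =>
      rw [show a ^ 2 * -(X * b ^ 2) = -(X * (a * b) ^ 2) by ring]
      exact .neg_X_mul_sq _ (by grind [natDegree_mul_le (p := a) (q := b)])
  | neg_X_mul_sq a ha =>
    induction hq with
    | add q q' _ _ ihq ihq' => rw [mul_add]; exact .add _ _ ihq ihq'
    | sq b hb =>
      rw [show -(X * a ^ 2) * b ^ 2 = -(X * (a * b) ^ 2) by ring]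
      exact .neg_X_mul_sq _ (by grind [natDegree_mul_le (p := a) (q := b)])
    | neg_X_mul_sq b hb =>
      rw [show -(X * a ^ 2) * -(X * b ^ 2) = (X * (a * b)) ^ 2 by ring]
      exact .sq _ (by
        grind [natDegree_mul_le (p := a) (q := b), natDegree_mul_le (p := X) (q := a * b),
          natDegree_X (R := ℝ)])

theorem const {c : ℝ} (hc : 0 ≤ c) (n : ℕ) : NegHalfLineSOS n (C c) := by
  rw [← Real.sq_sqrt hc, C_pow]
  exact .sq _ (by simp)

theorem const_sub_X {r : ℝ} (hr : 0 ≤ r) : NegHalfLineSOS 1 (C r - X) := by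
  have h := add _ _ (const hr 1) (neg_X_mul_sq (n := 1) 1 (by simp))
  rwa [one_pow, mul_one, ← sub_eq_add_neg] at h

end NegHalfLineSOS

theorem eval_nonneg_right_of_mul_nonneg {d q : ℝ[X]} {U : Set ℝ} (hU : IsOpen U) (hd : d ≠ 0)
    (hdU : ∀ t ∈ U, 0 ≤ d.eval t) (hdqU : ∀ t ∈ U, 0 ≤ (d * q).eval t) :
    ∀ t ∈ U, 0 ≤ q.eval t := by
  intro t ht
  by_contra! hqt
  have hroots : {s | d.IsRoot s} ∈ nhds t := by
    have hqneg := q.continuous.continuousAt.eventually_lt_const hqt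
    filter_upwards [hU.mem_nhds ht, hqneg] with s hsU hqs
    have hdqs := hdqU s hsU
    rw [eval_mul] at hdqs
    exact le_antisymm (nonpos_of_mul_nonneg_left hdqs hqs) (hdU s hsU)
  exact hd (eq_zero_of_infinite_isRoot d (infinite_of_mem_nhds t hroots))

theorem sq_X_sub_C_dvd_of_isRoot_of_nonneg {p : ℝ[X]} {U : Set ℝ} (hU : IsOpen U)
    (hpU : ∀ t ∈ U, 0 ≤ p.eval t) {r : ℝ} (hr : r ∈ U) (hroot : p.IsRoot r) :
    (X - C r) ^ 2 ∣ p := by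
  rcases eq_or_ne p 0 with rfl | hp0
  · exact dvd_zero _
  have hmin : IsLocalMin (fun t => p.eval t) r := by
    filter_upwards [hU.mem_nhds hr] with t ht
    rw [hroot.eq_zero]
    exact hpU t ht
  have hderiv : (derivative p).IsRoot r := by
    rw [IsRoot.def, ← p.deriv]
    exact hmin.deriv_eq_zero
  exact (le_rootMultiplicity_iff hp0).mp
    ((one_lt_rootMultiplicity_iff_isRoot hp0).mpr ⟨hroot, hderiv⟩)

theorem exists_factor_of_isRoot {p : ℝ[X]} (hp : ∀ t ∈ Set.Iio (0 : ℝ), 0 ≤ p.eval t) {r : ℝ}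
    (hr : p.IsRoot r) : ∃ d, d.natDegree ≠ 0 ∧ NegHalfLineSOS d.natDegree d ∧ d ∣ p := by
  rcases le_or_gt 0 r with h0 | h0
  · have hdeg : (C r - X).natDegree = 1 := by rw [← neg_sub, natDegree_neg, natDegree_X_sub_C]
    refine ⟨C r - X, by simp [hdeg], hdeg ▸ .const_sub_X h0, ?_⟩
    rw [← neg_sub, neg_dvd]
    exact dvd_iff_isRoot.mpr hr
  · have hdeg : ((X - C r) ^ 2).natDegree = 2 := by rw [natDegree_pow, natDegree_X_sub_C]
    exact ⟨(X - C r) ^ 2, by simp [hdeg],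
      .sq (X - C r) (by simp),
      sq_X_sub_C_dvd_of_isRoot_of_nonneg isOpen_Iio hp h0 hr⟩

theorem exists_factor_of_aeval_eq_zero {p : ℝ[X]} {z : ℂ} (hz : aeval z p = 0) (him : z.im ≠ 0) :
    ∃ d, d.natDegree ≠ 0 ∧ NegHalfLineSOS d.natDegree d ∧ d ∣ p := by
  have hdvd := quadratic_dvd_of_aeval_eq_zero_im_ne_zero p hz him
  have hsq : (X ^ 2 - C (2 * z.re) * X + C (‖z‖ ^ 2) : ℝ[X]) = (X - C z.re) ^ 2 + C z.im ^ 2 := by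
    rw [← Complex.normSq_eq_norm_sq, Complex.normSq_apply]
    simp only [C_mul, C_add, map_ofNat]
    ring
  have hdeg : ((X - C z.re) ^ 2 + C z.im ^ 2).natDegree = 2 := by
    rw [← C_pow, natDegree_add_C, natDegree_pow, natDegree_X_sub_C]
  rw [hsq] at hdvd
  exact ⟨_, by simp [hdeg],
    .add _ _ (.sq (X - C z.re) (by simp [hdeg])) (.sq (C z.im) (by simp)), hdvd⟩

theorem exists_factor_of_nonneg {p : ℝ[X]} (hp : ∀ t ∈ Set.Iio (0 : ℝ), 0 ≤ p.eval t)
    (hdeg : p.natDegree ≠ 0) : ∃ d, d.natDegree ≠ 0 ∧ NegHalfLineSOS d.natDegree d ∧ d ∣ p := by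
  obtain ⟨z, hz⟩ := IsAlgClosed.exists_aeval_eq_zero ℂ p
    (mt natDegree_eq_of_degree_eq_some hdeg)
  by_cases him : z.im = 0
  · have hre : (algebraMap ℝ ℂ z.re) = z := Complex.ext rfl (by simp [him])
    rw [← hre, aeval_algebraMap_eq_zero_iff] at hz
    exact exists_factor_of_isRoot hp hz
  · exact exists_factor_of_aeval_eq_zero hz him

theorem negHalfLineSOS_natDegree_of_nonneg {p : ℝ[X]} (hp : ∀ t ∈ Set.Iio (0 : ℝ), 0 ≤ p.eval t) :
    NegHalfLineSOS p.natDegree p := by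
  induction hn : p.natDegree using Nat.strong_induction_on generalizing p with
  | _ n ih =>
  rcases eq_or_ne n 0 with rfl | hn0
  · obtain ⟨c, rfl⟩ := natDegree_eq_zero.mp hn
    exact .const (by simpa using hp (-1) (by simp)) 0
  obtain ⟨d, hd, hdSOS, q, rfl⟩ := exists_factor_of_nonneg hp (hn ▸ hn0)
  have hd0 : d ≠ 0 := ne_zero_of_natDegree_gt (Nat.pos_of_ne_zero hd)
  have hq : ∀ t ∈ Set.Iio (0 : ℝ), 0 ≤ q.eval t :=
    eval_nonneg_right_of_mul_nonneg isOpen_Iio hd0 (fun _ => hdSOS.eval_nonneg) hp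
  have hq0 : q ≠ 0 := by rintro rfl; simp_all
  rw [natDegree_mul hd0 hq0] at hn
  exact hn ▸ hdSOS.mul (ih _ (by lia) hq rfl)

end HalfLinePolynomials

section StieltjesKernel

variable {𝓐 : Type*} [CStarAlgebra 𝓐]

theorem cfc_div_add_const {a : 𝓐} (ha : IsSelfAdjoint a) {l : ℝ}
    (hl : ∀ x ∈ spectrum ℝ a, x + l ≠ 0) :
    cfc (fun x : ℝ => x / (x + l)) a = 1 - l • Ring.inverse (a + algebraMap ℝ 𝓐 l) := by
  have hcont : ContinuousOn (fun x : ℝ => (x + l)⁻¹) (spectrum ℝ a) := .inv₀ (by fun_prop) hl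
  have hsplit : Set.EqOn (fun x => x / (x + l)) (fun x => 1 - l • (x + l)⁻¹) (spectrum ℝ a) := by
    intro x hx
    have := hl x hx
    simp only [smul_eq_mul]
    field_simp
    ring
  rw [cfc_congr hsplit, cfc_sub (fun _ => 1) (fun x => l • (x + l)⁻¹) a (by fun_prop)
    (hcont.const_smul l), cfc_const_one ℝ a, cfc_smul l _ a hcont, cfc_inv (fun x => x + l) a hl,
    cfc_add_const l (fun x => x) a, cfc_id' ℝ a]

theorem norm_div_add_le {x M l : ℝ} (hx : 0 < x) (hM : 1 ≤ M) (hxM : x ≤ M) (hl : 0 < l) :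
    ‖x / (x + l)‖ ≤ M * (1 + l)⁻¹ := by
  rw [Real.norm_of_nonneg (by positivity), ← div_eq_mul_inv,
    div_le_div_iff₀ (by positivity) (by positivity)]
  nlinarith

variable {μ : Measure ℝ} (hμ : ∀ᵐ l ∂μ, l ∈ Set.Ioi (0 : ℝ))
include hμ

theorem integral_div_add_nonneg {x : ℝ} (hx : 0 < x) : 0 ≤ ∫ l, x / (x + l) ∂μ := by
  refine integral_nonneg_of_ae ?_
  filter_upwards [hμ] with l hl
  exact (div_pos hx (add_pos hx hl)).le

variable (hint : Integrable (fun l : ℝ => (1 + l)⁻¹) μ)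
include hint

theorem continuousOn_integral_div_add :
    ContinuousOn (fun x => ∫ l, x / (x + l) ∂μ) (Set.Ioi 0) := by
  intro x₀ hx₀
  refine ContinuousAt.continuousWithinAt ?_
  have hnear : ∀ᶠ x : ℝ in nhds x₀, 0 < x ∧ x < x₀ + 1 :=
    (lt_mem_nhds hx₀).and (gt_mem_nhds (lt_add_one x₀))
  refine continuousAt_of_dominated (bound := fun l => (x₀ + 1) * (1 + l)⁻¹) ?_ ?_
    (hint.const_mul _) ?_
  · filter_upwards with x
    exact (measurable_const.div (measurable_const.add measurable_id)).aestronglyMeasurable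
  · filter_upwards [hnear] with x hx
    filter_upwards [hμ] with l hl
    exact norm_div_add_le hx.1 (by linarith [Set.mem_Ioi.mp hx₀]) hx.2.le hl
  · filter_upwards [hμ] with l hl
    exact continuousAt_id.div (by fun_prop) (add_pos hx₀ hl).ne'

theorem cfc_integral_div_add {a : 𝓐} (ha : IsSelfAdjoint a) (hsa : spectrum ℝ a ⊆ Set.Ioi 0) :
    Integrable (fun l => cfc (fun x : ℝ => x / (x + l)) a) μ ∧
      cfc (fun x => ∫ l, x / (x + l) ∂μ) a = ∫ l, cfc (fun x => x / (x + l)) a ∂μ := by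
  have hμr : μ.restrict (Set.Ioi 0) = μ := Measure.restrict_eq_self_of_ae_mem hμ
  obtain ⟨M, hM⟩ := (spectrum.isCompact (𝕜 := ℝ) a).bddAbove
  have hcont : ContinuousOn (Function.uncurry fun l x : ℝ => x / (x + l))
      (Set.Ioi 0 ×ˢ spectrum ℝ a) :=
    .div (by fun_prop) (by fun_prop) fun p hp => (add_pos (hsa hp.2) hp.1).ne'
  have hbound : ∀ᵐ l ∂μ.restrict (Set.Ioi 0), ∀ x ∈ spectrum ℝ a,
      ‖x / (x + l)‖ ≤ max 1 M * (1 + l)⁻¹ := by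
    filter_upwards [ae_restrict_mem measurableSet_Ioi] with l hl x hx
    exact norm_div_add_le (hsa hx) (le_max_left _ _) ((hM hx).trans (le_max_right _ _)) hl
  have hfin : HasFiniteIntegral (fun l : ℝ => max 1 M * (1 + l)⁻¹) (μ.restrict (Set.Ioi 0)) :=
    hμr.symm ▸ (hint.const_mul _).2
  have hintegrable := integrableOn_cfc measurableSet_Ioi (fun l x : ℝ => x / (x + l)) _ a hcont
    hbound hfin ha
  have hcfc := cfc_setIntegral measurableSet_Ioi (fun l x : ℝ => x / (x + l)) _ a hcont hbound
    hfin ha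
  rw [IntegrableOn, hμr] at hintegrable
  rw [hμr] at hcfc
  exact ⟨hintegrable, hcfc⟩

end StieltjesKernel

section OperatorMonotone

variable {𝓐 : Type*} [CStarAlgebra 𝓐]

theorem spectrum_complex_subset_image_ofReal_iff {a : 𝓐} (ha : IsSelfAdjoint a) {s : Set ℝ} :
    spectrum ℂ a ⊆ (fun x : ℝ => (x : ℂ)) '' s ↔ spectrum ℝ a ⊆ s := by
  rw [← ha.spectrumRestricts.algebraMap_image]
  exact Set.image_subset_image_iff Complex.ofReal_injective

variable [PartialOrder 𝓐]

variable (𝓐) in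
/-- Operator monotonicity of `f` on `s`, tested on the self-adjoint elements of the C⋆-algebra `𝓐`
with spectrum in `s`; the classical notion is the case of the bounded operators on an
infinite-dimensional Hilbert space. -/
def OperatorMonotoneOn (s : Set ℝ) (f : ℝ → ℝ) : Prop :=
  ∀ ⦃a b : 𝓐⦄, IsSelfAdjoint a → IsSelfAdjoint b → spectrum ℝ a ⊆ s → spectrum ℝ b ⊆ s →
    a ≤ b → cfc f a ≤ cfc f b

theorem operatorMonotoneOn_congr {f g : ℝ → ℝ} {s : Set ℝ} (h : Set.EqOn f g s) :
    OperatorMonotoneOn 𝓐 s f ↔ OperatorMonotoneOn 𝓐 s g := by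
  have hcfc : ∀ a : 𝓐, spectrum ℝ a ⊆ s → cfc f a = cfc g a := fun a hsa => cfc_congr (h.mono hsa)
  refine forall₂_congr fun a b => forall₄_congr fun ha hb hsa hsb => ?_
  rw [hcfc a hsa, hcfc b hsb]

variable [StarOrderedRing 𝓐]

theorem spectrum_subset_Ioi_of_algebraMap_le {a : 𝓐} (ha : IsSelfAdjoint a) {ε : ℝ} (hε : 0 < ε)
    (h : algebraMap ℝ 𝓐 ε ≤ a) : spectrum ℝ a ⊆ Set.Ioi 0 :=
  fun x hx => hε.trans_le ((algebraMap_le_iff_le_spectrum ha).mp h x hx)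

theorem operatorMonotoneOn_iff_isPositive {f : ℝ → ℝ} {s : Set ℝ} :
    OperatorMonotoneOn (H →L[ℂ] H) s f ↔
      ∀ A B : H →L[ℂ] H, IsSelfAdjoint A → IsSelfAdjoint B →
        spectrum ℂ A ⊆ (fun x : ℝ => (x : ℂ)) '' s → spectrum ℂ B ⊆ (fun x : ℝ => (x : ℂ)) '' s →
        (B - A).IsPositive → (cfc f B - cfc f A).IsPositive := by
  refine forall₂_congr fun A B => forall₂_congr fun hA hB => ?_
  rw [spectrum_complex_subset_image_ofReal_iff hA, spectrum_complex_subset_image_ofReal_iff hB]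
  rfl

theorem operatorMonotoneOn_div_add_const {l : ℝ} (hl : 0 < l) :
    OperatorMonotoneOn 𝓐 (Set.Ioi 0) (fun x => x / (x + l)) := by
  intro a b ha hb hsa hsb hab
  rw [cfc_div_add_const ha fun x hx => (add_pos (hsa hx) hl).ne',
    cfc_div_add_const hb fun x hx => (add_pos (hsb hx) hl).ne']
  have ha0 : 0 ≤ a := (StarOrderedRing.nonneg_iff_spectrum_nonneg (R := ℝ) a ha).mpr
    fun x hx => (hsa hx).le
  have hl' : IsStrictlyPositive (algebraMap ℝ 𝓐 l) := IsStrictlyPositive.iff_of_unital.mpr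
    ⟨algebraMap_nonneg 𝓐 hl.le, (IsUnit.mk0 l hl.ne').map (algebraMap ℝ 𝓐)⟩
  have := CStarAlgebra.ringInverse_le_ringInverse (add_le_add_left hab (algebraMap ℝ 𝓐 l))
    (.nonneg_add ha0 hl')
  gcongr

variable {μ : Measure ℝ} (hμ : ∀ᵐ l ∂μ, l ∈ Set.Ioi (0 : ℝ))
  (hint : Integrable (fun l : ℝ => (1 + l)⁻¹) μ)
include hμ hint

theorem operatorMonotoneOn_integral_div_add :
    OperatorMonotoneOn 𝓐 (Set.Ioi 0) (fun x => ∫ l, x / (x + l) ∂μ) := by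
  intro a b ha hb hsa hsb hab
  obtain ⟨hinta, hcfca⟩ := cfc_integral_div_add hμ hint ha hsa
  obtain ⟨hintb, hcfcb⟩ := cfc_integral_div_add hμ hint hb hsb
  rw [hcfca, hcfcb]
  refine integral_mono_ae hinta hintb ?_
  filter_upwards [hμ] with l hl
  exact operatorMonotoneOn_div_add_const hl ha hb hsa hsb hab

theorem operatorMonotoneOn_affine_add_integral (α : ℝ) {β : ℝ} (hβ : 0 ≤ β) :
    OperatorMonotoneOn 𝓐 (Set.Ioi 0) (fun x => α + β * x + ∫ l, x / (x + l) ∂μ) := by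
  have hcfc : ∀ a : 𝓐, IsSelfAdjoint a → spectrum ℝ a ⊆ Set.Ioi 0 →
      cfc (fun x => α + β * x + ∫ l, x / (x + l) ∂μ) a =
        algebraMap ℝ 𝓐 α + β • a + cfc (fun x => ∫ l, x / (x + l) ∂μ) a := by
    intro a ha hsa
    rw [cfc_add a (fun x => α + β * x) _ (by fun_prop)
        ((continuousOn_integral_div_add hμ hint).mono hsa),
      cfc_const_add α (fun x => β * x) a, cfc_const_mul β (fun x => x) a, cfc_id' ℝ a]
  intro a b ha hb hsa hsb hab
  rw [hcfc a ha hsa, hcfc b hb hsb]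
  have := operatorMonotoneOn_integral_div_add hμ hint ha hb hsa hsb hab
  gcongr

end OperatorMonotone

section LoewnerPerturbation

open InnerProductSpace

theorem exists_orthonormal_of_not_finiteDimensional {𝕜 E : Type*} [RCLike 𝕜] [NormedAddCommGroup E]
    [InnerProductSpace 𝕜 E] [CompleteSpace E] (hinf : ¬ FiniteDimensional 𝕜 E) (ι : Type*)
    [Finite ι] : ∃ e : ι → E, Orthonormal 𝕜 e := by
  obtain ⟨w, b, -⟩ := exists_hilbertBasis 𝕜 E
  have : Infinite w := by
    by_contra hfin
    rw [not_infinite_iff_finite] at hfin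
    have := Fintype.ofFinite w
    exact hinf (Module.Finite.of_basis b.toOrthonormalBasis.toBasis)
  obtain ⟨n, ⟨equiv⟩⟩ := Finite.exists_equiv_fin ι
  exact ⟨_, b.orthonormal.comp _ ((Infinite.natEmbedding w).injective.comp
    (Fin.val_injective.comp equiv.injective))⟩

omit [CompleteSpace H] in
theorem mem_spectrum_of_apply_eq_smul {T : H →L[ℂ] H} {y : ℝ} {g : H} (hg0 : g ≠ 0)
    (hg : T g = y • g) : y ∈ spectrum ℝ T := by
  rw [spectrum.mem_iff]
  intro hu
  obtain ⟨S, hS⟩ := hu.exists_left_inv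
  have hker : (algebraMap ℝ (H →L[ℂ] H) y - T) g = 0 := by
    rw [Algebra.algebraMap_eq_smul_one, sub_apply, smul_apply, one_apply_eq_self, hg, sub_self]
  refine hg0 ?_
  calc g = (S * (algebraMap ℝ (H →L[ℂ] H) y - T)) g := by rw [hS, one_apply_eq_self]
    _ = 0 := by rw [mul_apply_eq_comp, hker, map_zero]

theorem cfcHom_apply_of_apply_eq_smul {T : H →L[ℂ] H} (hT : IsSelfAdjoint T)
    (φ : C(spectrum ℝ T, ℝ)) {y : spectrum ℝ T} {g : H} (hg : T g = (y : ℝ) • g) :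
    cfcHom hT φ g = φ y • g := by
  induction φ using ContinuousMap.induction_on_of_compact with
  | const r =>
    have hconst : cfcHom hT (ContinuousMap.const (spectrum ℝ T) r) = algebraMap ℝ (H →L[ℂ] H) r :=
      AlgHomClass.commutes (cfcHom hT) r
    rw [hconst, Algebra.algebraMap_eq_smul_one, smul_apply, one_apply_eq_self,
      ContinuousMap.const_apply]
  | id => rw [cfcHom_id hT, hg]; rfl
  | star_id => rw [map_star, cfcHom_id hT, hT.star_eq, hg]; rfl
  | add φ ψ hφ hψ => rw [map_add, add_apply, hφ, hψ, ContinuousMap.add_apply, add_smul]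
  | mul φ ψ hφ hψ =>
    rw [map_mul, mul_apply_eq_comp, hψ, map_smul_of_tower, hφ, smul_smul, mul_comm]
    rfl
  | frequently φ hφ =>
    have hclosed : IsClosed {ψ : C(spectrum ℝ T, ℝ) | cfcHom hT ψ g = ψ y • g} :=
      isClosed_eq ((ContinuousLinearMap.apply ℂ H g).continuous.comp (cfcHom_continuous hT))
        (by fun_prop)
    exact hclosed.closure_subset (mem_closure_iff_frequently.mpr hφ)

theorem cfc_apply_of_apply_eq_smul {T : H →L[ℂ] H} (hT : IsSelfAdjoint T) {f : ℝ → ℝ}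
    (hf : ContinuousOn f (spectrum ℝ T)) {y : ℝ} {g : H} (hg : T g = y • g) :
    cfc f T g = f y • g := by
  rcases eq_or_ne g 0 with rfl | hg0
  · rw [map_zero, smul_zero]
  rw [cfc_apply f T hT hf, cfcHom_apply_of_apply_eq_smul hT _
    (y := ⟨y, mem_spectrum_of_apply_eq_smul hg0 hg⟩) hg]
  rfl

theorem cfc_apply_sum_smul {T : H →L[ℂ] H} (hT : IsSelfAdjoint T) {f : ℝ → ℝ}
    (hf : ContinuousOn f (spectrum ℝ T)) {κ : Type*} (s : Finset κ) {y : κ → ℝ} {g : κ → H}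
    (hg : ∀ j, T (g j) = y j • g j) (γ : κ → ℝ) :
    cfc f T (∑ j ∈ s, γ j • g j) = ∑ j ∈ s, (γ j * f (y j)) • g j := by
  simp only [map_sum, map_smul_of_tower, cfc_apply_of_apply_eq_smul hT hf (hg _), smul_smul]

variable {ι : Type*} [Fintype ι] {e : ι → H}

omit [CompleteSpace H] in
theorem inner_linearCombination_of_orthonormal (he : Orthonormal ℂ e) (a b : ι → ℝ) :
    inner ℂ (Fintype.linearCombination ℝ e a) (Fintype.linearCombination ℝ e b) =
      ((a ⬝ᵥ b : ℝ) : ℂ) := by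
  simp only [Fintype.linearCombination_apply, ← Complex.coe_smul]
  rw [he.inner_sum]
  simp [dotProduct]

/-- The operator with eigenvalue `x i` on the vector `e i` of an orthonormal family and `ε` on the
orthogonal complement of the family. -/
noncomputable def diagonalOperator (e : ι → H) (ε : ℝ) (x : ι → ℝ) : H →L[ℂ] H :=
  algebraMap ℝ (H →L[ℂ] H) ε + ∑ i, (x i - ε) • rankOne ℂ (e i) (e i)

omit [CompleteSpace H] in
theorem rankOne_self_nonneg (w : H) : 0 ≤ rankOne ℂ w w :=
  (nonneg_iff_isPositive _).mpr (isPositive_rankOne_self w)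

theorem algebraMap_le_diagonalOperator {ε : ℝ} {x : ι → ℝ} (hx : ∀ i, ε ≤ x i) :
    algebraMap ℝ (H →L[ℂ] H) ε ≤ diagonalOperator e ε x :=
  le_add_of_nonneg_right (Finset.sum_nonneg fun i _ =>
    smul_nonneg (sub_nonneg.mpr (hx i)) (rankOne_self_nonneg _))

omit [CompleteSpace H] in
theorem diagonalOperator_apply_linearCombination (he : Orthonormal ℂ e) (ε : ℝ) (x a : ι → ℝ) :
    diagonalOperator e ε x (Fintype.linearCombination ℝ e a) =
      Fintype.linearCombination ℝ e (x * a) := by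
  classical
  have happly : ∀ i, diagonalOperator e ε x (e i) = x i • e i := by
    intro i
    have hrank : ∀ j, rankOne ℂ (e j) (e j) (e i) = if j = i then e i else 0 := by
      intro j
      rw [rankOne_apply, orthonormal_iff_ite.mp he]
      aesop
    simp [diagonalOperator, Algebra.algebraMap_eq_smul_one, sum_apply, hrank, ← add_smul]
  simp only [Fintype.linearCombination_apply, map_sum, map_smul_of_tower, happly, smul_smul,
    Pi.mul_apply, mul_comm]

theorem inner_cfc_linearCombination (he : Orthonormal ℂ e) {T : H →L[ℂ] H} (hT : IsSelfAdjoint T)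
    {f : ℝ → ℝ} (hf : ContinuousOn f (spectrum ℝ T)) {κ : Type*} [Fintype κ] {y γ : κ → ℝ}
    {G : κ → ι → ℝ}
    (hG : ∀ j, T (Fintype.linearCombination ℝ e (G j)) = Fintype.linearCombination ℝ e (y j • G j))
    {u : ι → ℝ} (hu : u = ∑ j, γ j • G j) :
    inner ℂ (Fintype.linearCombination ℝ e u) (cfc f T (Fintype.linearCombination ℝ e u)) =
      ((∑ j, γ j * f (y j) * (u ⬝ᵥ G j) : ℝ) : ℂ) := by
  have hcfc : cfc f T (Fintype.linearCombination ℝ e u) =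
      Fintype.linearCombination ℝ e (∑ j, (γ j * f (y j)) • G j) := by
    simp only [map_smul] at hG
    simp only [hu, map_sum, map_smul, cfc_apply_sum_smul hT hf _ hG]
  rw [hcfc, inner_linearCombination_of_orthonormal he, dotProduct_sum]
  simp only [dotProduct_smul, smul_eq_mul]

-- Compares the quadratic forms of `f A ≤ f (A + v vᵀ)` at `u`, where `A` is diagonal with entries
-- `x` and the `G j` are eigenvectors of `A + v vᵀ`.
theorem OperatorMonotoneOn.sum_mul_sq_le_of_eigenvectors {f : ℝ → ℝ}
    (hmono : OperatorMonotoneOn (H →L[ℂ] H) (Set.Ioi 0) f) (hf : ContinuousOn f (Set.Ioi 0))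
    (hinf : ¬ FiniteDimensional ℂ H) {κ : Type*} [Fintype κ] {x v u : ι → ℝ} (hx : ∀ i, 0 < x i)
    {y γ : κ → ℝ} {G : κ → ι → ℝ} (hG : ∀ j, x * G j + (v ⬝ᵥ G j) • v = y j • G j)
    (hu : u = ∑ j, γ j • G j) :
    ∑ i, f (x i) * u i ^ 2 ≤ ∑ j, γ j * f (y j) * (u ⬝ᵥ G j) := by
  classical
  obtain ⟨e, he⟩ := exists_orthonormal_of_not_finiteDimensional hinf ι
  obtain ⟨ε, hε, hεx⟩ : ∃ ε : ℝ, ε ∈ Set.Ioi 0 ∧ ∀ i, ε ≤ x i :=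
    (eventually_mem_nhdsWithin.and (Filter.eventually_all.mpr fun i =>
      eventually_nhdsWithin_of_eventually_nhds (eventually_le_nhds (hx i)))).exists
  let lc := Fintype.linearCombination ℝ e
  let A : H →L[ℂ] H := diagonalOperator e ε x
  let B : H →L[ℂ] H := A + rankOne ℂ (lc v) (lc v)
  have hεA : algebraMap ℝ (H →L[ℂ] H) ε ≤ A := algebraMap_le_diagonalOperator hεx
  have hAB : A ≤ B := le_add_of_nonneg_right (rankOne_self_nonneg _)
  have hε0 : 0 ≤ algebraMap ℝ (H →L[ℂ] H) ε := algebraMap_nonneg _ (le_of_lt hε)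
  have hA : IsSelfAdjoint A := .of_nonneg (hε0.trans hεA)
  have hB : IsSelfAdjoint B := .of_nonneg (hε0.trans (hεA.trans hAB))
  have hsA := spectrum_subset_Ioi_of_algebraMap_le hA hε hεA
  have hsB := spectrum_subset_Ioi_of_algebraMap_le hB hε (hεA.trans hAB)
  have hAe : ∀ i, A (lc (Pi.single i 1)) = lc (x i • Pi.single i 1) := fun i => by
    rw [diagonalOperator_apply_linearCombination he]
    congr 1
    ext k
    by_cases hk : k = i <;> simp [hk]
  have hBG : ∀ j, B (lc (G j)) = lc (y j • G j) := fun j => by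
    rw [add_apply, diagonalOperator_apply_linearCombination he, rankOne_apply,
      inner_linearCombination_of_orthonormal he, Complex.coe_smul, ← map_smul, ← map_add, hG]
  have hfA := inner_cfc_linearCombination he hA (hf.mono hsA) hAe (pi_eq_sum_univ' u)
  have hfB := inner_cfc_linearCombination he hB (hf.mono hsB) hBG hu
  have hpos := ((le_def _ _).mp (hmono hA hB hsA hsB hAB)).re_inner_nonneg_right (lc u)
  rw [sub_apply, inner_sub_right, hfA, hfB, ← Complex.ofReal_sub] at hpos
  refine le_of_eq_of_le (Finset.sum_congr rfl fun i _ => ?_) (sub_nonneg.mp hpos)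
  rw [dotProduct_single_one]
  ring

end LoewnerPerturbation

section DividedDifference

open Polynomial Lagrange

variable {F : Type*} [Field F] [DecidableEq F]

theorem nodalWeight_insert_self {S : Finset F} {t : F} (ht : t ∉ S) :
    nodalWeight (insert t S) id t = ((nodal S id).eval t)⁻¹ := by
  rw [nodalWeight_eq_eval_nodal_erase_inv, Finset.erase_insert ht, id]

theorem nodalWeight_insert_of_ne {S : Finset F} {t x : F} (ht : t ∉ S) (hxt : x ≠ t) :
    nodalWeight (insert t S) id x = (x - t)⁻¹ * nodalWeight S id x := by
  rw [nodalWeight, Finset.erase_insert_of_ne hxt.symm,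
    Finset.prod_insert fun h => ht (Finset.mem_of_mem_erase h)]
  rfl

theorem nodalWeight_union_of_notMem {S T : Finset F} (h : Disjoint S T) {x : F} (hx : x ∉ T) :
    nodalWeight (S ∪ T) id x = nodalWeight S id x * ((nodal T id).eval x)⁻¹ := by
  rw [nodalWeight, Finset.erase_union_distrib, Finset.erase_eq_of_notMem hx,
    Finset.prod_union (h.mono_left (Finset.erase_subset _ _)), eval_nodal,
    ← Finset.prod_inv_distrib]
  rfl

/-- The divided difference `[S; g]` of `g` at the nodes `S`, in its Lagrange form. -/
def dividedDifference (S : Finset F) (g : F → F) : F := ∑ x ∈ S, nodalWeight S id x * g x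

theorem dividedDifference_congr {S : Finset F} {g h : F → F} (hgh : ∀ x ∈ S, g x = h x) :
    dividedDifference S g = dividedDifference S h :=
  Finset.sum_congr rfl fun x hx => by rw [hgh x hx]

theorem dividedDifference_insert {S : Finset F} {t : F} (ht : t ∉ S) (g : F → F) :
    dividedDifference (insert t S) g =
      g t / (nodal S id).eval t + dividedDifference S (fun x => g x / (x - t)) := by
  rw [dividedDifference, Finset.sum_insert ht, nodalWeight_insert_self ht, inv_mul_eq_div]
  congr 1
  refine Finset.sum_congr rfl fun x hx => ?_
  rw [nodalWeight_insert_of_ne ht (ne_of_mem_of_not_mem hx ht)]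
  ring

theorem dividedDifference_insert_sub_mul {S : Finset F} {r : F} (hr : r ∉ S) (g : F → F) :
    dividedDifference (insert r S) (fun x => (x - r) * g x) = dividedDifference S g := by
  rw [dividedDifference_insert hr, sub_self, zero_mul, zero_div, zero_add]
  exact dividedDifference_congr fun x hx =>
    mul_div_cancel_left₀ _ (sub_ne_zero.mpr (ne_of_mem_of_not_mem hx hr))

theorem dividedDifference_eval_div_sub {S : Finset F} {b : F[X]} (hb : b.degree < S.card) {z : F}
    (hz : z ∉ S) :
    dividedDifference S (fun x => b.eval x / (z - x)) = b.eval z / (nodal S id).eval z := by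
  have hzS : ∀ x ∈ S, z ≠ id x := fun x hx => (ne_of_mem_of_not_mem hx hz).symm
  rw [eq_div_iff (eval_nodal_not_at_node hzS), mul_comm]
  calc (nodal S id).eval z * dividedDifference S (fun x => b.eval x / (z - x))
      = (interpolate S id fun x => b.eval x).eval z := by
        rw [eval_interpolate_not_at_node _ hzS, dividedDifference]
        congr 1
        exact Finset.sum_congr rfl fun x _ => by rw [id, div_eq_inv_mul, mul_assoc]
    _ = b.eval z := by
        conv_rhs => rw [eq_interpolate Function.injective_id.injOn hb]
        rfl

theorem dividedDifference_nodal_div_sub {X Y : Finset F} (h : Disjoint X Y)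
    (hcard : X.card = Y.card) {y : F} (hy : y ∈ Y) :
    dividedDifference X (fun x => (nodal Y id).eval x / (y - x)) = -1 := by
  have hyX : y ∉ X := Finset.disjoint_right.mp h hy
  have hdeg : (nodal Y id - nodal X id : F[X]).degree < X.card := by
    have := degree_sub_lt_left (p := nodal Y id) (q := nodal X id)
      (by rw [degree_nodal, degree_nodal, hcard]) nodal_ne_zero
      (by rw [nodal_monic.leadingCoeff, nodal_monic.leadingCoeff])
    rwa [degree_nodal, ← hcard] at this
  have hX : ∀ x ∈ X, (nodal X id).eval x = 0 := fun x hx => eval_nodal_at_node (v := id) hx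
  calc dividedDifference X (fun x => (nodal Y id).eval x / (y - x))
      = dividedDifference X (fun x => (nodal Y id - nodal X id).eval x / (y - x)) :=
        dividedDifference_congr fun x hx => by rw [eval_sub, hX x hx, sub_zero]
    _ = (nodal Y id - nodal X id).eval y / (nodal X id).eval y :=
        dividedDifference_eval_div_sub hdeg hyX
    _ = -1 := by
        have hy0 : (nodal Y id).eval y = 0 := eval_nodal_at_node (v := id) hy
        have hX0 : (nodal X id).eval y ≠ 0 :=
          eval_nodal_not_at_node fun x hx => (ne_of_mem_of_not_mem hx hyX).symm
        rw [eval_sub, hy0, zero_sub, neg_div, div_self hX0]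

theorem dividedDifference_union {X Y : Finset F} (h : Disjoint X Y) (g : F → F) :
    dividedDifference (X ∪ Y) g =
      dividedDifference X (fun x => g x / (nodal Y id).eval x) +
        dividedDifference Y (fun y => g y / (nodal X id).eval y) := by
  rw [dividedDifference, Finset.sum_union h]
  congr 1
  · refine Finset.sum_congr rfl fun x hx => ?_
    rw [nodalWeight_union_of_notMem h (Finset.disjoint_left.mp h hx)]
    ring
  · refine Finset.sum_congr rfl fun y hy => ?_
    rw [Finset.union_comm, nodalWeight_union_of_notMem h.symm (Finset.disjoint_right.mp h hy)]
    ring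

end DividedDifference

section NodalWeightSign

open Lagrange Finset

variable {F : Type*} [Field F] [LinearOrder F] [IsStrictOrderedRing F]

theorem eval_nodal_pos_of_forall_lt {S : Finset F} {t : F} (ht : ∀ x ∈ S, x < t) :
    0 < (nodal S id).eval t := by
  rw [eval_nodal]
  exact prod_pos fun x hx => sub_pos.mpr (ht x hx)

theorem eval_nodal_pos_of_even_of_forall_gt {S : Finset F} (hS : Even #S) {t : F}
    (ht : ∀ x ∈ S, t < x) : 0 < (nodal S id).eval t := by
  rw [eval_nodal, prod_congr rfl fun x _ => (neg_sub (id x) t).symm, prod_neg, hS.neg_one_pow,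
    one_mul]
  exact prod_pos fun x hx => sub_pos.mpr (ht x hx)

theorem nodalWeight_insert_neg_iff {S : Finset F} {t x : F} (ht : ∀ x ∈ S, x < t) (hx : x ∈ S) :
    nodalWeight (insert t S) id x < 0 ↔ ¬ nodalWeight S id x < 0 := by
  rw [nodalWeight_insert_of_ne (fun h => (ht t h).false) (ht x hx).ne, ← smul_eq_mul,
    smul_neg_iff_of_neg_left (inv_lt_zero.mpr (sub_neg.mpr (ht x hx))), not_lt]
  exact (nodalWeight_ne_zero Function.injective_id.injOn hx).symm.le_iff_lt.symm

theorem card_filter_nodalWeight_neg (S : Finset F) :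
    #{x ∈ S | nodalWeight S id x < 0} = #S / 2 := by
  induction S using Finset.induction_on_max with
  | empty => simp
  | insert t S ht ih =>
    have htS : t ∉ S := fun h => (ht t h).false
    have htop : ¬ nodalWeight (insert t S) id t < 0 := by
      rw [nodalWeight_insert_self htS, inv_lt_zero, not_lt]
      exact (eval_nodal_pos_of_forall_lt ht).le
    rw [filter_insert, if_neg htop, filter_congr fun x hx => nodalWeight_insert_neg_iff ht hx,
      card_insert_of_notMem htS]
    have := card_filter_add_card_filter_not (s := S) (fun x => nodalWeight S id x < 0)
    lia

end NodalWeightSign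

section LoewnerInequality

open Polynomial Lagrange Finset

variable {f : ℝ → ℝ} (hmono : OperatorMonotoneOn (H →L[ℂ] H) (Set.Ioi 0) f)
  (hf : ContinuousOn f (Set.Ioi 0)) (hinf : ¬ FiniteDimensional ℂ H)
include hmono hf hinf

-- The secular equation `hsec` makes each `y ∈ Y` an eigenvalue of `diag X + v vᵀ`, where
-- `v x = √(w x)`, with eigenvector `x ↦ v x / (y - x)`.
theorem OperatorMonotoneOn.sum_mul_sq_le_of_secular {X Y : Finset ℝ} (hXY : Disjoint X Y)
    (hX : ∀ x ∈ X, 0 < x) {w q γ : ℝ → ℝ} (hw : ∀ x ∈ X, 0 ≤ w x)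
    (hsec : ∀ y ∈ Y, ∑ x ∈ X, w x / (y - x) = 1) (hq : ∀ x ∈ X, q x = ∑ y ∈ Y, γ y / (y - x)) :
    ∑ x ∈ X, f x * (w x * q x ^ 2) ≤ ∑ y ∈ Y, γ y * f y * ∑ x ∈ X, w x * q x / (y - x) := by
  let v : X → ℝ := fun x => √(w x)
  let u : X → ℝ := fun x => v x * q x
  let G : Y → X → ℝ := fun y x => v x / (y - x)
  have hv : ∀ x : X, v x * v x = w x := fun x => Real.mul_self_sqrt (hw x x.2)
  have hne : ∀ (x : X) (y : Y), (y : ℝ) - x ≠ 0 := fun x y =>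
    sub_ne_zero.mpr (ne_of_mem_of_not_mem x.2 (disjoint_right.mp hXY y.2)).symm
  have hvG : ∀ y : Y, v ⬝ᵥ G y = 1 := fun y => by
    rw [← hsec y y.2, ← sum_coe_sort X]
    exact sum_congr rfl fun x _ => by rw [← hv x, mul_div_assoc]
  have huG : ∀ y : Y, u ⬝ᵥ G y = ∑ x ∈ X, w x * q x / (y - x) := fun y => by
    rw [← sum_coe_sort X]
    exact sum_congr rfl fun x _ => by rw [← hv x]; ring
  have hG : ∀ y : Y, (fun x : X => (x : ℝ)) * G y + (v ⬝ᵥ G y) • v = (y : ℝ) • G y := fun y => by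
    ext x
    have := hne x y
    simp only [hvG, one_smul, Pi.add_apply, Pi.mul_apply, Pi.smul_apply, smul_eq_mul, G]
    field_simp
    ring
  have hu : u = ∑ y : Y, γ y • G y := by
    ext x
    simp only [u, hq x x.2, Finset.sum_apply, ← sum_coe_sort Y, mul_sum]
    exact sum_congr rfl fun y _ => mul_div_left_comm _ _ _
  have key := hmono.sum_mul_sq_le_of_eigenvectors hf hinf (fun x : X => hX x x.2) hG hu
  simp only [huG] at key
  simp only [← sum_coe_sort X (fun x => f x * _), ← sum_coe_sort Y (fun y => γ y * f y * _)]
  refine le_of_eq_of_le (sum_congr rfl fun x _ => ?_) key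
  rw [mul_pow, sq (v x), hv x]

theorem OperatorMonotoneOn.dividedDifference_union_mul_sq_nonneg {X Y : Finset ℝ}
    (hXY : Disjoint X Y) (hcard : #X = #Y) (hX : ∀ x ∈ X, 0 < x)
    (hsign : ∀ x ∈ X, nodalWeight X id x * (nodal Y id).eval x ≤ 0) {b : ℝ[X]}
    (hb : b.degree < #X) : 0 ≤ dividedDifference (X ∪ Y) (fun x => f x * b.eval x ^ 2) := by
  let w : ℝ → ℝ := fun x => -(nodalWeight X id x * (nodal Y id).eval x)
  let q : ℝ → ℝ := fun x => b.eval x / (nodal Y id).eval x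
  let γ : ℝ → ℝ := fun y => -(nodalWeight Y id y * b.eval y)
  have hY0 : ∀ x ∈ X, (nodal Y id).eval x ≠ 0 := fun x hx =>
    eval_nodal_not_at_node fun y hy => ne_of_mem_of_not_mem hx (disjoint_right.mp hXY hy)
  have hsec : ∀ y ∈ Y, ∑ x ∈ X, w x / (y - x) = 1 := fun y hy => by
    rw [← neg_neg (1 : ℝ), ← dividedDifference_nodal_div_sub hXY hcard hy, dividedDifference,
      ← sum_neg_distrib]
    exact sum_congr rfl fun x _ => by ring
  have hq : ∀ x ∈ X, q x = ∑ y ∈ Y, γ y / (y - x) := fun x hx => by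
    simp only [q]
    rw [← dividedDifference_eval_div_sub (hcard ▸ hb) (disjoint_left.mp hXY hx), dividedDifference]
    refine sum_congr rfl fun y _ => ?_
    rw [← neg_sub y x, div_neg]
    ring
  have hwq : ∀ y ∈ Y, ∑ x ∈ X, w x * q x / (y - x) = -(b.eval y / (nodal X id).eval y) :=
    fun y hy => by
    rw [← dividedDifference_eval_div_sub hb (disjoint_right.mp hXY hy), dividedDifference,
      ← sum_neg_distrib]
    refine sum_congr rfl fun x hx => ?_
    have := hY0 x hx
    simp only [w, q]
    field_simp
  have key := hmono.sum_mul_sq_le_of_secular hf hinf hXY hX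
    (fun x hx => neg_nonneg.mpr (hsign x hx)) hsec hq
  rw [dividedDifference_union hXY, add_comm, ← sub_neg_eq_add, dividedDifference,
    dividedDifference, ← sum_neg_distrib]
  refine sub_nonneg.mpr (le_of_eq_of_le ?_ (key.trans_eq ?_))
  · refine sum_congr rfl fun x hx => ?_
    have := hY0 x hx
    simp only [q]
    field_simp
  · refine sum_congr rfl fun y hy => ?_
    rw [hwq y hy]
    ring

theorem OperatorMonotoneOn.dividedDifference_mul_sq_nonneg {m : ℕ} {S : Finset ℝ}
    (hS : #S = 2 * m) (hpos : ∀ x ∈ S, 0 < x) {b : ℝ[X]} (hb : b.degree < m) :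
    0 ≤ dividedDifference S (fun x => f x * b.eval x ^ 2) := by
  set X := {x ∈ S | nodalWeight S id x < 0}
  set Y := {x ∈ S | ¬ nodalWeight S id x < 0}
  have hXY : Disjoint X Y := disjoint_filter_filter_not _ _ _
  have hunion : X ∪ Y = S := filter_union_filter_not_eq _ _
  have hX : #X = m := by rw [card_filter_nodalWeight_neg, hS, Nat.mul_div_cancel_left _ two_pos]
  have hY : #Y = m := by
    have := card_union_of_disjoint hXY
    rw [hunion] at this
    lia
  have hsign : ∀ x ∈ X, nodalWeight X id x * (nodal Y id).eval x ≤ 0 := by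
    intro x hx
    have hxY := disjoint_left.mp hXY hx
    have hw := (mem_filter.mp hx).2
    rw [← hunion, nodalWeight_union_of_notMem hXY hxY, ← div_eq_mul_inv] at hw
    exact (mul_neg_iff.mpr (div_neg_iff.mp hw)).le
  rw [← hunion]
  exact hmono.dividedDifference_union_mul_sq_nonneg hf hinf hXY (hX.trans hY.symm)
    (fun x hx => hpos x (mem_filter.mp hx).1) hsign (hX.symm ▸ hb)

end LoewnerInequality

section KernelPositivity

open Polynomial Lagrange Finset

variable {f : ℝ → ℝ} (hmono : OperatorMonotoneOn (H →L[ℂ] H) (Set.Ioi 0) f)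
  (hf : ContinuousOn f (Set.Ioi 0)) (hnonneg : ∀ x : ℝ, 0 < x → 0 ≤ f x)
  (hinf : ¬ FiniteDimensional ℂ H)
include hmono hf hnonneg hinf

-- Adjoin the nodes `t` and `s` to `S`, and put the factor `x - s` into the squared polynomial: one
-- power of it removes the node `s` again, and the other makes the contribution of `t` nonpositive.
theorem OperatorMonotoneOn.dividedDifference_mul_sq_mul_div_nonneg {m : ℕ} {S : Finset ℝ}
    (hS : #S = 2 * m) {a : ℝ[X]} (ha : a.degree < m) {t s : ℝ} (ht : 0 < t) (hts : t < s)
    (htS : ∀ x ∈ S, t < x) (hSs : ∀ x ∈ S, x < s) :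
    0 ≤ dividedDifference S (fun x => f x * a.eval x ^ 2 * (x - s) / (x - t)) := by
  have htnS : t ∉ S := fun h => (htS t h).false
  have hsnS : s ∉ insert t S := by
    rw [mem_insert, not_or]
    exact ⟨hts.ne', fun h => (hSs s h).false⟩
  have hcard : #(insert s (insert t S)) = 2 * (m + 1) := by
    rw [card_insert_of_notMem hsnS, card_insert_of_notMem htnS, hS]
    ring
  have hpos : ∀ x ∈ insert s (insert t S), 0 < x :=
    forall_mem_insert _ _ _ |>.mpr ⟨ht.trans hts,
      forall_mem_insert _ _ _ |>.mpr ⟨ht, fun x hx => ht.trans (htS x hx)⟩⟩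
  have hdeg : (a * (X - C s)).degree < ((m + 1 : ℕ) : WithBot ℕ) := by
    rw [degree_mul, degree_X_sub_C, Nat.cast_add, Nat.cast_one]
    exact WithBot.add_lt_add_right WithBot.one_ne_bot ha
  have key := hmono.dividedDifference_mul_sq_nonneg hf hinf hcard hpos hdeg
  rw [dividedDifference_congr (h := fun x => (x - s) * (f x * a.eval x ^ 2 * (x - s)))
      fun x _ => by rw [eval_mul, eval_sub, eval_X, eval_C]; ring,
    dividedDifference_insert_sub_mul hsnS, dividedDifference_insert htnS] at key
  have hnode : f t * a.eval t ^ 2 * (t - s) / (nodal S id).eval t ≤ 0 :=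
    div_nonpos_of_nonpos_of_nonneg
      (mul_nonpos_of_nonneg_of_nonpos (mul_nonneg (hnonneg t ht) (sq_nonneg _))
        (sub_nonpos.mpr hts.le))
      (eval_nodal_pos_of_even_of_forall_gt (hS ▸ even_two_mul m) htS).le
  linarith

theorem OperatorMonotoneOn.dividedDifference_mul_sq_div_nonpos {m : ℕ} {S : Finset ℝ}
    (hS : #S = 2 * m) (hpos : ∀ x ∈ S, 0 < x) {a : ℝ[X]} (ha : a.degree < m) :
    dividedDifference S (fun x => f x * a.eval x ^ 2 / x) ≤ 0 := by
  let φ : ℝ → ℝ := fun t =>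
    ∑ x ∈ S, nodalWeight S id x * (f x * a.eval x ^ 2 * (t * x - 1) / (x - t))
  have hφ0 : φ 0 = -dividedDifference S (fun x => f x * a.eval x ^ 2 / x) := by
    rw [dividedDifference, ← sum_neg_distrib]
    exact sum_congr rfl fun x _ => by ring
  have hcont : ContinuousAt φ 0 := tendsto_finsetSum _ fun x hx =>
    ContinuousAt.mul (by fun_prop)
      (.div (by fun_prop) (by fun_prop) (by simpa using (hpos x hx).ne'))
  have hφ : ∀ᶠ t in nhdsWithin 0 (Set.Ioi 0), 0 ≤ φ t := by
    have hlt : ∀ᶠ t : ℝ in nhdsWithin 0 (Set.Ioi 0), ∀ x ∈ insert 1 S, t < x :=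
      nhdsWithin_le_nhds ((Filter.eventually_all_finset _).mpr fun x hx =>
        eventually_lt_nhds ((forall_mem_insert _ _ _).mpr ⟨one_pos, hpos⟩ x hx))
    have hinv : ∀ᶠ t : ℝ in nhdsWithin 0 (Set.Ioi 0), ∀ x ∈ insert 1 S, x < t⁻¹ :=
      (Filter.eventually_all_finset _).mpr fun x _ =>
        tendsto_inv_nhdsGT_zero.eventually_gt_atTop x
    filter_upwards [self_mem_nhdsWithin, hlt, hinv] with t (ht : 0 < t) htS hSt
    rw [forall_mem_insert] at htS hSt
    have := hmono.dividedDifference_mul_sq_mul_div_nonneg hf hnonneg hinf hS ha ht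
      (htS.1.trans hSt.1) htS.2 hSt.2
    refine (mul_nonneg ht.le this).trans_eq ?_
    rw [dividedDifference, mul_sum]
    refine sum_congr rfl fun x _ => ?_
    have : t ≠ 0 := ht.ne'
    field_simp
  have := ge_of_tendsto (hcont.tendsto.mono_left nhdsWithin_le_nhds) hφ
  rwa [hφ0, neg_nonneg] at this

theorem OperatorMonotoneOn.dividedDifference_mul_div_nonpos {m : ℕ} {S : Finset ℝ}
    (hS : #S = 2 * m) (hpos : ∀ x ∈ S, 0 < x) {n : ℕ} (hn : n < #S) {p : ℝ[X]}
    (hp : NegHalfLineSOS n p) : dividedDifference S (fun x => f x * p.eval x / x) ≤ 0 := by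
  induction hp with
  | sq a ha =>
    simp only [eval_pow]
    refine hmono.dividedDifference_mul_sq_div_nonpos hf hnonneg hinf hS hpos
      (degree_le_natDegree.trans_lt ?_)
    exact_mod_cast (by lia : a.natDegree < m)
  | neg_X_mul_sq b hb =>
    have hdeg : b.degree < m := degree_le_natDegree.trans_lt
      (by exact_mod_cast (by lia : b.natDegree < m))
    refine neg_nonneg.mp ((hmono.dividedDifference_mul_sq_nonneg hf hinf hS hpos hdeg).trans_eq ?_)
    rw [dividedDifference, dividedDifference, ← sum_neg_distrib]
    refine sum_congr rfl fun x hx => ?_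
    have := (hpos x hx).ne'
    simp only [eval_neg, eval_mul, eval_X, eval_pow]
    field_simp
  | add p q _ _ ihp ihq =>
    refine le_of_eq_of_le ?_ (add_nonpos ihp ihq)
    simp only [dividedDifference, ← sum_add_distrib, eval_add]
    exact sum_congr rfl fun x _ => by ring

theorem OperatorMonotoneOn.sum_mul_nonneg_of_even {S : Finset ℝ} (hS : Even #S)
    (hpos : ∀ x ∈ S, 0 < x) {c : ℝ → ℝ} (hc : ∀ l : ℝ, 0 < l → 0 ≤ ∑ x ∈ S, c x * (x / (x + l))) :
    0 ≤ ∑ x ∈ S, c x * f x := by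
  rcases S.eq_empty_or_nonempty with rfl | hne
  · rw [sum_empty]
  have hw : ∀ x ∈ S, nodalWeight S id x ≠ 0 := fun x hx =>
    nodalWeight_ne_zero Function.injective_id.injOn hx
  set p : ℝ[X] := interpolate S id fun x => -(c x * x / nodalWeight S id x) with hp_def
  have hp : ∀ t ∈ Set.Iio (0 : ℝ), 0 ≤ p.eval t := fun t ht => by
    have htS : ∀ x ∈ S, t < x := fun x hx => ht.trans (hpos x hx)
    have hsum : ∑ x ∈ S, nodalWeight S id x * (t - x)⁻¹ * -(c x * x / nodalWeight S id x) =
        ∑ x ∈ S, c x * (x / (x + -t)) := sum_congr rfl fun x hx => by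
      have := hw x hx
      rw [← sub_eq_add_neg, ← neg_sub x t, inv_neg]
      field_simp
    have htS' : ∀ x ∈ S, t ≠ id x := fun x hx => (htS x hx).ne
    rw [hp_def, eval_interpolate_not_at_node _ htS']
    exact mul_nonneg (eval_nodal_pos_of_even_of_forall_gt hS htS).le
      ((hc (-t) (neg_pos.mpr ht)).trans_eq hsum.symm)
  have hdeg : p.natDegree < #S := Nat.lt_of_le_pred hne.card_pos
    (natDegree_le_of_degree_le (degree_interpolate_le _ Function.injective_id.injOn))
  obtain ⟨m, hm⟩ := hS
  have key := hmono.dividedDifference_mul_div_nonpos hf hnonneg hinf (hm.trans (two_mul m).symm)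
    hpos hdeg (negHalfLineSOS_natDegree_of_nonneg hp)
  refine neg_nonpos.mp (le_of_eq_of_le ?_ key)
  rw [dividedDifference, ← sum_neg_distrib]
  refine sum_congr rfl fun x hx => ?_
  have hpx : p.eval x = -(c x * x / nodalWeight S id x) :=
    eval_interpolate_at_node (v := id) _ Function.injective_id.injOn hx
  have := hw x hx
  have := (hpos x hx).ne'
  rw [hpx]
  field_simp

theorem OperatorMonotoneOn.linearCombination_nonneg {c : Set.Ioi (0 : ℝ) →₀ ℝ}
    (hc : ∀ l : ℝ, 0 < l →
      0 ≤ Finsupp.linearCombination ℝ (fun x : Set.Ioi (0 : ℝ) => (x : ℝ) / (x + l)) c) :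
    0 ≤ Finsupp.linearCombination ℝ (fun x : Set.Ioi (0 : ℝ) => f x) c := by
  obtain ⟨T, hcT, hT⟩ := Infinite.exists_superset_card_eq c.support (#c.support + #c.support)
    (Nat.le_add_left _ _)
  let ι : Set.Ioi (0 : ℝ) ↪ ℝ := .subtype _
  have hsum : ∀ g : ℝ → ℝ, Finsupp.linearCombination ℝ (fun x : Set.Ioi (0 : ℝ) => g x) c =
      ∑ x ∈ T.map ι, c.embDomain ι x * g x := fun g => by
    rw [Finsupp.linearCombination_apply,
      c.sum_of_support_subset hcT (fun x a => a • g x) fun x _ => zero_smul ℝ (g x), sum_map]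
    exact sum_congr rfl fun x _ => by rw [Finsupp.embDomain_apply_self]; rfl
  rw [hsum]
  refine hmono.sum_mul_nonneg_of_even hf hnonneg hinf ⟨_, (card_map ι).trans hT⟩
    (forall_mem_map.mpr fun x _ => x.2) fun l hl => ?_
  rw [← hsum fun x => x / (x + l)]
  exact hc l hl

end KernelPositivity

section PositiveFunctional

variable {X : Type*} [TopologicalSpace X] [CompactSpace X]

theorem exists_positiveLinearMap_apply_eq_of_linearCombination_nonneg {ι : Type*} {k : ι → C(X, ℝ)}
    {g : ι → ℝ} {i₀ : ι} (hone : k i₀ = 1)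
    (h : ∀ c, 0 ≤ Finsupp.linearCombination ℝ k c → 0 ≤ Finsupp.linearCombination ℝ g c) :
    ∃ Λ : C(X, ℝ) →ₚ[ℝ] ℝ, ∀ i, Λ (k i) = g i := by
  set Φ := Finsupp.linearCombination ℝ k
  set L := Finsupp.linearCombination ℝ g
  have hk : ∀ i, Φ (Finsupp.single i 1) = k i := fun i => by
    rw [Finsupp.linearCombination_single, one_smul]
  have hker : L ∈ (LinearMap.ker Φ).dualAnnihilator := by
    refine (Submodule.mem_dualAnnihilator L).mpr fun c (hc : Φ c = 0) => ?_
    refine le_antisymm (neg_nonneg.mp ?_) (h c hc.ge)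
    rw [← map_neg]
    exact h (-c) (by rw [map_neg, hc, neg_zero])
  rw [← LinearMap.range_dualMap_eq_dualAnnihilator_ker] at hker
  obtain ⟨F, hF⟩ := hker
  have hFΦ : ∀ c, F (Φ c) = L c := fun c => LinearMap.congr_fun hF c
  obtain ⟨Λ, hΛF, hΛ⟩ := riesz_extension (PointedCone.positive ℝ C(X, ℝ))
    (F.toPMap (LinearMap.range Φ))
    (by rintro ⟨_, c, rfl⟩ hc; exact (h c hc).trans_eq (hFΦ c).symm)
    (fun φ => by
      refine ⟨⟨‖φ‖ • k i₀, (LinearMap.range Φ).smul_mem _ ⟨_, hk i₀⟩⟩, fun s => ?_⟩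
      simpa [hone] using neg_le_iff_add_nonneg'.mp (φ.neg_norm_le_apply s))
  refine ⟨.mk₀ Λ hΛ, fun i => ?_⟩
  calc Λ (k i) = F (k i) := hΛF ⟨k i, _, hk i⟩
    _ = g i := by rw [← hk, hFΦ, Finsupp.linearCombination_single, one_smul]

theorem exists_isFiniteMeasure_integral_eq [T2Space X] [MeasurableSpace X] [BorelSpace X]
    (Λ : C(X, ℝ) →ₚ[ℝ] ℝ) :
    ∃ ν : Measure X, IsFiniteMeasure ν ∧ ∀ φ : C(X, ℝ), ∫ x, φ x ∂ν = Λ φ := by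
  let Λc : CompactlySupportedContinuousMap X ℝ →ₚ[ℝ] ℝ :=
    .mk₀ { toFun φ := Λ φ.toContinuousMap
           map_add' φ ψ := map_add Λ φ.toContinuousMap ψ.toContinuousMap
           map_smul' a φ := map_smul Λ a φ.toContinuousMap }
      fun φ hφ => map_nonneg Λ (show (0 : C(X, ℝ)) ≤ φ.toContinuousMap from hφ)
  exact ⟨RealRMK.rieszMeasure Λc, inferInstance, fun φ => RealRMK.integral_rieszMeasure Λc
    (CompactlySupportedContinuousMap.continuousMapEquiv φ)⟩

end PositiveFunctional

section StieltjesMeasure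

open unitInterval

theorem one_sub_mul_add_pos {x : ℝ} (hx : 0 < x) (s : I) : 0 < (1 - s) * x + s := by
  rcases s.2.1.lt_or_eq with hs | hs
  · exact add_pos_of_nonneg_of_pos (mul_nonneg (sub_nonneg.mpr s.2.2) hx.le) hs
  · rw [← hs, sub_zero, one_mul, add_zero]
    exact hx

/-- The Stieltjes kernel `(1 + l) * x / (x + l)`, extended continuously to `l ∈ [0, ∞]` and
parametrized by `s = l / (1 + l) ∈ [0, 1]`. -/
noncomputable def stieltjesKernel (x : Set.Ioi (0 : ℝ)) : C(I, ℝ) where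
  toFun s := x / ((1 - s) * x + s)
  continuous_toFun := .div (by fun_prop) (by fun_prop) fun s => (one_sub_mul_add_pos x.2 s).ne'

theorem stieltjesKernel_one : stieltjesKernel ⟨1, Set.mem_Ioi.mpr one_pos⟩ = 1 := by
  ext s
  simp [stieltjesKernel]

theorem stieltjesKernel_apply_of_lt_one (x : Set.Ioi (0 : ℝ)) {s : I} (hs : s < 1) :
    stieltjesKernel x s = (1 - s : ℝ)⁻¹ * (x / (x + s / (1 - s))) := by
  have : (1 - s : ℝ) ≠ 0 := (sub_pos.mpr (show (s : ℝ) < 1 from hs)).ne'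
  simp only [stieltjesKernel, ContinuousMap.coe_mk]
  field_simp

theorem linearCombination_div_add_nonneg {c : Set.Ioi (0 : ℝ) →₀ ℝ}
    (hc : 0 ≤ Finsupp.linearCombination ℝ stieltjesKernel c) {l : ℝ} (hl : 0 < l) :
    0 ≤ Finsupp.linearCombination ℝ (fun x : Set.Ioi (0 : ℝ) => (x : ℝ) / (x + l)) c := by
  have hs : l / (1 + l) < 1 := (div_lt_one (by positivity)).mpr (lt_one_add l)
  let s : I := ⟨l / (1 + l), by positivity, hs.le⟩
  have hsl : (s / (1 - s) : ℝ) = l := by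
    simp only [s]
    field_simp
    ring
  let eval : C(I, ℝ) →ₗ[ℝ] ℝ := (1 - s : ℝ) • (ContinuousMap.evalCLM ℝ s).toLinearMap
  have hker : eval ∘ stieltjesKernel = fun x : Set.Ioi (0 : ℝ) => (x : ℝ) / (x + l) := by
    ext x
    change (1 - s : ℝ) * stieltjesKernel x s = _
    rw [stieltjesKernel_apply_of_lt_one x hs, hsl, mul_inv_cancel_left₀ (sub_pos.mpr hs).ne']
  have hcs : 0 ≤ eval (Finsupp.linearCombination ℝ stieltjesKernel c) :=
    mul_nonneg (sub_nonneg.mpr hs.le) (hc s)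
  rwa [Finsupp.apply_linearCombination, hker] at hcs

/-- The measure on `(0, ∞)` obtained from a measure `ν` on `[0, 1]` by discarding the endpoints and
undoing the parametrization and the normalization of `stieltjesKernel`. -/
noncomputable def stieltjesMeasure (ν : Measure I) : Measure ℝ :=
  ((ν.restrict (Set.Ioo 0 1)).withDensity fun s => ENNReal.ofReal (1 - s)⁻¹).map
    fun s : I => (s / (1 - s) : ℝ)

variable (ν : Measure I)

theorem ae_stieltjesMeasure_mem_Ioi : ∀ᵐ l ∂stieltjesMeasure ν, l ∈ Set.Ioi (0 : ℝ) := by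
  refine (ae_map_iff (by fun_prop) measurableSet_Ioi).mpr ?_
  refine (withDensity_absolutelyContinuous _ _).ae_le ?_
  filter_upwards [ae_restrict_mem measurableSet_Ioo] with s hs
  exact div_pos hs.1 (sub_pos.mpr hs.2)

theorem integrable_one_add_inv_stieltjesMeasure [IsFiniteMeasure ν] :
    Integrable (fun l : ℝ => (1 + l)⁻¹) (stieltjesMeasure ν) := by
  have hmeas : Measurable fun l : ℝ => (1 + l)⁻¹ := by fun_prop
  rw [stieltjesMeasure, integrable_map_measure hmeas.aestronglyMeasurable (by fun_prop),
    integrable_withDensity_iff_integrable_smul' (by fun_prop) (by simp)]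
  refine (integrable_const (1 : ℝ)).congr ?_
  filter_upwards [ae_restrict_mem measurableSet_Ioo] with s hs
  have : 0 < (1 - s : ℝ) := sub_pos.mpr hs.2
  rw [ENNReal.toReal_ofReal (by positivity), Function.comp_apply, smul_eq_mul]
  field_simp
  ring

theorem integral_div_add_stieltjesMeasure (x : Set.Ioi (0 : ℝ)) :
    ∫ l, x / (x + l) ∂stieltjesMeasure ν = ∫ s in Set.Ioo 0 1, stieltjesKernel x s ∂ν := by
  have hmeas : Measurable fun l : ℝ => x / (x + l) := by fun_prop
  rw [stieltjesMeasure, integral_map (by fun_prop) hmeas.aestronglyMeasurable,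
    integral_withDensity_eq_integral_toReal_smul (by fun_prop) (by simp)]
  refine setIntegral_congr_fun measurableSet_Ioo fun s hs => ?_
  have : 0 < (1 - s : ℝ) := sub_pos.mpr hs.2
  rw [ENNReal.toReal_ofReal (by positivity), stieltjesKernel_apply_of_lt_one x hs.2, smul_eq_mul]

theorem integral_stieltjesKernel [IsFiniteMeasure ν] (x : Set.Ioi (0 : ℝ)) :
    ∫ s, stieltjesKernel x s ∂ν =
      ν.real {0} + ν.real {1} * x + ∫ l, x / (x + l) ∂stieltjesMeasure ν := by
  have hint : Integrable (stieltjesKernel x) ν :=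
    (stieltjesKernel x).continuous.integrable_of_hasCompactSupport (.of_compactSpace _)
  have hcompl : (Set.Ioo (0 : I) 1)ᶜ = {0} ∪ {1} := by
    rw [Set.compl_eq_univ_sdiff, ← Set.Icc_bot_top]
    exact Set.Icc_sdiff_Ioo_same zero_le_one
  rw [integral_div_add_stieltjesMeasure, ← integral_add_compl measurableSet_Ioo.compl hint,
    compl_compl, hcompl, setIntegral_union (by simp) (measurableSet_singleton _) hint.integrableOn
      hint.integrableOn, integral_singleton, integral_singleton]
  have := (Set.mem_Ioi.mp x.2).ne'
  simp [stieltjesKernel, this]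

end StieltjesMeasure

theorem OperatorMonotoneOn.exists_integral_stieltjesKernel_eq {f : ℝ → ℝ}
    (hmono : OperatorMonotoneOn (H →L[ℂ] H) (Set.Ioi 0) f) (hf : ContinuousOn f (Set.Ioi 0))
    (hnonneg : ∀ x : ℝ, 0 < x → 0 ≤ f x) (hinf : ¬ FiniteDimensional ℂ H) :
    ∃ ν : Measure unitInterval, IsFiniteMeasure ν ∧
      ∀ x : Set.Ioi (0 : ℝ), f x = ∫ s, stieltjesKernel x s ∂ν := by
  obtain ⟨Λ, hΛ⟩ := exists_positiveLinearMap_apply_eq_of_linearCombination_nonneg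
    (g := fun x : Set.Ioi (0 : ℝ) => f x) stieltjesKernel_one fun c hc =>
      hmono.linearCombination_nonneg hf hnonneg hinf fun _ => linearCombination_div_add_nonneg hc
  obtain ⟨ν, hν, hνΛ⟩ := exists_isFiniteMeasure_integral_eq Λ
  exact ⟨ν, hν, fun x => by rw [hνΛ, hΛ]⟩

theorem stmt14_general (hinf : ¬ FiniteDimensional ℂ H)
    (f : ℝ → ℝ) (hf : ContinuousOn f (Set.Ioi (0 : ℝ))) :
    ((∀ x : ℝ, 0 < x → 0 ≤ f x) ∧
      (∀ A B : H →L[ℂ] H, IsSelfAdjoint A → IsSelfAdjoint B →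
        spectrum ℂ A ⊆ (fun x : ℝ => (x : ℂ)) '' Set.Ioi (0 : ℝ) →
        spectrum ℂ B ⊆ (fun x : ℝ => (x : ℂ)) '' Set.Ioi (0 : ℝ) →
        (B - A).IsPositive → (cfc f B - cfc f A).IsPositive))
    ↔ (∃ (α β : ℝ) (μ : Measure ℝ), 0 ≤ α ∧ 0 ≤ β ∧ μ (Set.Ioi (0 : ℝ))ᶜ = 0 ∧
        Integrable (fun l : ℝ => (1 + l)⁻¹) μ ∧
        ∀ x : ℝ, 0 < x → f x = α + β * x + ∫ l, x / (x + l) ∂μ) := by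
  rw [← operatorMonotoneOn_iff_isPositive]
  constructor
  · rintro ⟨hnonneg, hmono⟩
    obtain ⟨ν, _, hν⟩ := hmono.exists_integral_stieltjesKernel_eq hf hnonneg hinf
    exact ⟨ν.real {0}, ν.real {1}, stieltjesMeasure ν, measureReal_nonneg, measureReal_nonneg,
      ae_stieltjesMeasure_mem_Ioi ν, integrable_one_add_inv_stieltjesMeasure ν,
      fun x hx => (hν ⟨x, hx⟩).trans (integral_stieltjesKernel ν ⟨x, hx⟩)⟩
  · rintro ⟨α, β, μ, hα, hβ, hμ, hint, hrep⟩
    refine ⟨fun x hx => ?_, (operatorMonotoneOn_congr hrep).mpr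
      (operatorMonotoneOn_affine_add_integral hμ hint α hβ)⟩
    rw [hrep x hx]
    exact add_nonneg (add_nonneg hα (mul_nonneg hβ hx.le)) (integral_div_add_nonneg hμ hx)

/-- A continuous real function on `(0, ∞)` is non-negative and operator monotone if and only
if `f(x) = α + βx + ∫_{(0,∞)} x/(x+λ) dμ(λ)` with `α, β ≥ 0` and `μ` a positive measure on
`(0, ∞)` with `∫ (1+λ)⁻¹ dμ(λ) < ∞`. -/
theorem stmt14 [TopologicalSpace.SeparableSpace H] (hinf : ¬ FiniteDimensional ℂ H)
    (f : ℝ → ℝ) (hf : ContinuousOn f (Set.Ioi (0 : ℝ))) :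
    ((∀ x : ℝ, 0 < x → 0 ≤ f x) ∧
      (∀ A B : H →L[ℂ] H, IsSelfAdjoint A → IsSelfAdjoint B →
        spectrum ℂ A ⊆ (fun x : ℝ => (x : ℂ)) '' Set.Ioi (0 : ℝ) →
        spectrum ℂ B ⊆ (fun x : ℝ => (x : ℂ)) '' Set.Ioi (0 : ℝ) →
        (B - A).IsPositive → (cfc f B - cfc f A).IsPositive))
    ↔ (∃ (α β : ℝ) (μ : Measure ℝ), 0 ≤ α ∧ 0 ≤ β ∧ μ (Set.Ioi (0 : ℝ))ᶜ = 0 ∧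
        Integrable (fun l : ℝ => (1 + l)⁻¹) μ ∧
        ∀ x : ℝ, 0 < x → f x = α + β * x + ∫ l, x / (x + l) ∂μ) :=
  stmt14_general hinf f hf
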